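/- Let ω ∈ ℝ^k, let 𝒦 ⊂ U be compact, let κ > 0, and let χ: [0,1] × U × U → U be a smooth map such that: (i) χ(0,x,y) = x and χ(1,x,y) = y for all x,y ∈ U; (ii) ∂_s χ(0,x,y) ≠ 0 whenever x ≠ y; (iii) for every pair of smooth curves x₁, x₂: ℝ → U, every φ ∈ 𝕋^k and all (s,t) ∈ [0,1] × ℝ, writing ξ(s,t) := ∂_s χ(s,x₁(t),x₂(t)), η(s,t) := ∂_t χ(s,x₁(t),x₂(t)), ∇_ξ η := ∂_s η + Γ_{χ(s,x₁(t),x₂(t))}(ξ,η), and ‖a‖_g² := (g(χ(s,x₁(t),x₂(t))) a, a), one has ∂²/∂s² [ ½ ( g(χ(s,x₁(t),x₂(t))) η(s,t), η(s,t) ) + W(φ+tω, χ(s,x₁(t),x₂(t))) ] ≥ κ [ ‖∇_ξ η‖_g² + ‖ξ‖_g² ( ‖η‖_g² + 1 ) ]. Then for every φ ∈ 𝕋^k there is at most one twice continuously differentiable function x: ℝ → 𝒦 with sup_{t∈ℝ} ‖ẋ(t)‖ < ∞ solving the Euler–Lagrange equations ẍ + Γ_x(ẋ,ẋ) = g(x)⁻¹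 W'_x(φ+tω, x) for all t ∈ ℝ. (Single-chart form of the paper's uniqueness proposition for bounded solutions.) -/

import Mathlib

/-!
Let `x₁`, `x₂` be two bounded solutions, `ξ = ∂_s χ(s,x₁,x₂)`, `η = ∂_t χ(s,x₁,x₂)`, and let
`ℓ(s,t)` be the Lagrangian density along `χ` (`lag`). At `s = 0` and `s = 1` the path `χ` is at a
solution, so the first variation `∂_s ℓ` there is the total time derivative of `(g ẋ, ξ)`
(`hasDerivAt_momentum`; this uses `∂_s η = ∂_t ξ`). Hence the momentum pairing
`a(t) = (g(x₂)ẋ₂, ξ(1,t)) - (g(x₁)ẋ₁, ξ(0,t))` satisfies `a' = ∂_s ℓ(1,t) - ∂_s ℓ(0,t)`.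

The convexity hypothesis depends only on the 1-jets of the curves at the given time, so it extends
from smooth curves to the `C²` solutions (`le_deriv_lag`). Retaining only the term `κ‖ξ‖_g²` and
integrating over `s`, one gets `a' ≥ κ λ |χ(s,x₁,x₂) - x₁|²` in each coordinate and for each
`s ∈ [0,1]`, where `λ` is an ellipticity constant of `g` on a compact set (`sq_displacement_le`).

The pairing is a continuous function of the jets `(x₁,x₂,ẋ₁,ẋ₂)`, which range in a compact set,
and it vanishes at jets for which the path `s ↦ χ(s,p,q)` is constant. By compactness, `|a| ≥ ε`
forces `a' ≥ δ(ε) > 0` (`exists_displacement`). As `a` is bounded and nondecreasing, it must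
vanish identically: a positive value would make `a` grow linearly as `t → ∞`, a negative one as
`t → -∞`. Then `a' = 0`, and the displacement bound at `s = 1` gives `x₁ = x₂`.

Derivatives in `s` are taken within `[0,1]`, since `χ` carries no information outside.
-/

open MeasureTheory Real Set

/-- Directional derivative `D_ω f(φ) := (d/dt)|_{t=0} f(φ + tω)`. -/
noncomputable def dirDeriv {k : ℕ} {E : Type*} [NormedAddCommGroup E] [NormedSpace ℝ E]
    (ω : Fin k → ℝ) (f : (Fin k → ℝ) → E) (φ : Fin k → ℝ) : E :=
  deriv (fun t : ℝ => f (φ + t • ω)) 0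

/-- A function on `ℝ^k` represents a function on the torus `𝕋^k = ℝ^k/(2πℤ^k)`
if it is `2π`-periodic in every coordinate. -/
def TorusPer {k : ℕ} {E : Type*} (f : (Fin k → ℝ) → E) : Prop :=
  ∀ (φ : Fin k → ℝ) (n : Fin k → ℤ), f (φ + fun i => 2 * Real.pi * (n i : ℝ)) = f φ

/-- Fundamental domain `[0,2π]^k` of the torus `𝕋^k`. -/
def torusBox (k : ℕ) : Set (Fin k → ℝ) := Set.Icc 0 (fun _ => 2 * Real.pi)

/-- Euclidean dot product on `ℝ^n`. -/
def dotp {n : ℕ} (a b : Fin n → ℝ) : ℝ := ∑ i, a i * b i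

/-- Euclidean partial derivative `∂_j f(x)`. -/
noncomputable def pd {m : ℕ} (f : (Fin m → ℝ) → ℝ) (x : Fin m → ℝ) (j : Fin m) : ℝ :=
  fderiv ℝ f x (Pi.single j 1)

/-- The Christoffel bilinear map of a metric tensor `g`:
`Γ_x(a,b)^i = ½ Σ_{j,k,l} (g(x)⁻¹)^{il}(∂_j g_{lk}(x) + ∂_k g_{jl}(x) − ∂_l g_{jk}(x)) a^j b^k`. -/
noncomputable def christoffel {m : ℕ} (g : (Fin m → ℝ) → Matrix (Fin m) (Fin m) ℝ)
    (x a b : Fin m → ℝ) : Fin m → ℝ :=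
  fun i => (1 / 2) * ∑ l, (g x)⁻¹ i l *
    ∑ j, ∑ k, (pd (fun y => g y l k) x j + pd (fun y => g y j l) x k
      - pd (fun y => g y j k) x l) * a j * b k

/-- Euclidean partial gradient `W'_x(φ,x)` of a force function `W(φ,·)`. -/
noncomputable def gradW {k m : ℕ} (W : (Fin k → ℝ) → (Fin m → ℝ) → ℝ)
    (φ : Fin k → ℝ) (x : Fin m → ℝ) : Fin m → ℝ :=
  fun i => fderiv ℝ (W φ) x (Pi.single i 1)

/-- Euclidean norm on `ℝ^n`. -/
noncomputable def eNorm {n : ℕ} (a : Fin n → ℝ) : ℝ := Real.sqrt (∑ i, a i ^ 2)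

/-- `ξ(s,t) := ∂_s χ(s, x₁(t), x₂(t))`. -/
noncomputable def xiF {m : ℕ} (χ : ℝ → (Fin m → ℝ) → (Fin m → ℝ) → (Fin m → ℝ))
    (x₁ x₂ : ℝ → (Fin m → ℝ)) (s t : ℝ) : Fin m → ℝ :=
  deriv (fun s' : ℝ => χ s' (x₁ t) (x₂ t)) s

/-- `η(s,t) := ∂_t χ(s, x₁(t), x₂(t))`. -/
noncomputable def etaF {m : ℕ} (χ : ℝ → (Fin m → ℝ) → (Fin m → ℝ) → (Fin m → ℝ))
    (x₁ x₂ : ℝ → (Fin m → ℝ)) (s t : ℝ) : Fin m → ℝ :=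
  deriv (fun t' : ℝ => χ s (x₁ t') (x₂ t')) t

/-! ### The metric as a bilinear form -/

/-- The derivative of `x ↦ (g(x) a, b)` in the direction `u`, for fixed `a` and `b`. -/
noncomputable def metricDeriv {m : ℕ} (g : (Fin m → ℝ) → Matrix (Fin m) (Fin m) ℝ)
    (x u a b : Fin m → ℝ) : ℝ :=
  ∑ i, ∑ j, fderiv ℝ (fun y => g y i j) x u * a j * b i

lemma dotp_mulVec {m : ℕ} (M : Matrix (Fin m) (Fin m) ℝ) (a b : Fin m → ℝ) :
    dotp (M.mulVec a) b = ∑ i, ∑ j, M i j * a j * b i := by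
  simp [dotp, Matrix.mulVec, dotProduct, Finset.sum_mul]

lemma dotp_mulVec_comm {m : ℕ} {M : Matrix (Fin m) (Fin m) ℝ} (hM : M.IsHermitian)
    (a b : Fin m → ℝ) : dotp (M.mulVec a) b = dotp (M.mulVec b) a := by
  rw [dotp_mulVec, dotp_mulVec, Finset.sum_comm]
  refine Finset.sum_congr rfl fun i _ => Finset.sum_congr rfl fun j _ => ?_
  have := hM.apply i j
  simp only [star_trivial] at this
  rw [this]; ring

lemma dotp_mulVec_pos {m : ℕ} {M : Matrix (Fin m) (Fin m) ℝ} (hM : M.PosDef)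
    {a : Fin m → ℝ} (ha : a ≠ 0) : 0 < dotp (M.mulVec a) a := by
  have := hM.dotProduct_mulVec_pos ha
  rwa [star_trivial, dotProduct_comm] at this

lemma dotp_mulVec_nonneg {m : ℕ} {M : Matrix (Fin m) (Fin m) ℝ} (hM : M.PosDef)
    (a : Fin m → ℝ) : 0 ≤ dotp (M.mulVec a) a := by
  rcases eq_or_ne a 0 with rfl | ha
  · simp [dotp]
  · exact (dotp_mulVec_pos hM ha).le

lemma dotp_mulVec_add {m : ℕ} (M : Matrix (Fin m) (Fin m) ℝ) (a b c : Fin m → ℝ) :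
    dotp (M.mulVec (a + b)) c = dotp (M.mulVec a) c + dotp (M.mulVec b) c := by
  simp [dotp, Matrix.mulVec_add, add_mul, Finset.sum_add_distrib]

lemma fderiv_eq_sum_pd {m : ℕ} (f : (Fin m → ℝ) → ℝ) (x u : Fin m → ℝ) :
    fderiv ℝ f x u = ∑ j, pd f x j * u j := by
  conv_lhs => rw [pi_eq_sum_univ' u]
  simp only [map_sum, map_smul, smul_eq_mul, pd]
  refine Finset.sum_congr rfl fun i _ => ?_
  rw [mul_comm]

/-- The Christoffel map with its index lowered: `(g Γ(a,a), ξ) = ∂_a g(a,ξ) - ½ ∂_ξ g(a,a)`. -/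
lemma dotp_mulVec_christoffel {m : ℕ} {U : Set (Fin m → ℝ)} (hU : IsOpen U)
    {g : (Fin m → ℝ) → Matrix (Fin m) (Fin m) ℝ} (hgpos : ∀ x ∈ U, (g x).PosDef)
    {x : Fin m → ℝ} (hx : x ∈ U) (a ξ : Fin m → ℝ) :
    dotp ((g x).mulVec (christoffel g x a a)) ξ
      = metricDeriv g x a a ξ - (1 / 2) * metricDeriv g x ξ a a := by
  have hsym : ∀ i j l, pd (fun y => g y i j) x l = pd (fun y => g y j i) x l := by
    intro i j l
    have : (fun y => g y i j) =ᶠ[nhds x] fun y => g y j i := by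
      filter_upwards [hU.mem_nhds hx] with y hy
      simpa using (hgpos y hy).1.apply j i
    simp only [pd, this.fderiv_eq]
  set c : Fin m → ℝ := fun l => (1 / 2) * ∑ j, ∑ k, (pd (fun y => g y l k) x j
    + pd (fun y => g y j l) x k - pd (fun y => g y j k) x l) * a j * a k with hc
  have hΓ : christoffel g x a a = (g x)⁻¹.mulVec c := by
    ext i
    simp only [christoffel, Matrix.mulVec, dotProduct, hc, Finset.mul_sum]
    refine Finset.sum_congr rfl fun l _ => Finset.sum_congr rfl fun j _ =>
      Finset.sum_congr rfl fun k _ => ?_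
    ring
  have hdet : IsUnit (g x).det := (hgpos x hx).det_pos.ne'.isUnit
  rw [hΓ, Matrix.mulVec_mulVec, Matrix.mul_nonsing_inv _ hdet, Matrix.one_mulVec]
  simp only [metricDeriv, fderiv_eq_sum_pd, dotp, hc]
  have e1 : ∀ l, ∑ j, ∑ k, (pd (fun y => g y l k) x j
      + pd (fun y => g y j l) x k - pd (fun y => g y j k) x l) * a j * a k
      = 2 * ∑ j, ∑ k, pd (fun y => g y l k) x j * a j * a k
        - ∑ j, ∑ k, pd (fun y => g y j k) x l * a j * a k := by
    intro l
    have : ∑ j, ∑ k, pd (fun y => g y j l) x k * a j * a k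
        = ∑ j, ∑ k, pd (fun y => g y l k) x j * a j * a k := by
      rw [Finset.sum_comm]
      refine Finset.sum_congr rfl fun j _ => Finset.sum_congr rfl fun k _ => ?_
      rw [hsym k l]; ring
    simp only [sub_mul, add_mul, Finset.sum_add_distrib, Finset.sum_sub_distrib, this]
    ring
  simp only [e1]
  have e2 : ∑ i, ∑ j, (∑ l, pd (fun y => g y i j) x l * a l) * a j * ξ i
      = ∑ l, (∑ j, ∑ k, pd (fun y => g y l k) x j * a j * a k) * ξ l := by
    refine Finset.sum_congr rfl fun i _ => ?_
    rw [← Finset.sum_mul]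
    simp only [Finset.sum_mul]
    rw [Finset.sum_comm]
  have e3 : ∑ i, ∑ j, (∑ l, pd (fun y => g y i j) x l * ξ l) * a j * a i
      = ∑ l, (∑ j, ∑ k, pd (fun y => g y j k) x l * a j * a k) * ξ l := by
    simp only [Finset.sum_mul]
    rw [Finset.sum_comm' (t' := Finset.univ) (s' := fun _ => Finset.univ) (by simp)]
    rw [Finset.sum_comm]
    conv_rhs => rw [Finset.sum_comm]; enter [2, j]; rw [Finset.sum_comm]
    rw [Finset.sum_comm]
    refine Finset.sum_congr rfl fun i _ => Finset.sum_congr rfl fun j _ =>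
      Finset.sum_congr rfl fun l _ => ?_
    rw [hsym j i]; ring
  rw [e2, e3, Finset.mul_sum, ← Finset.sum_sub_distrib]
  refine Finset.sum_congr rfl fun l _ => ?_
  ring

/-- Leibniz rule for the metric paired with two vector fields along a curve. -/
lemma hasDerivWithinAt_metric {m : ℕ} {U : Set (Fin m → ℝ)} (hU : IsOpen U)
    {g : (Fin m → ℝ) → Matrix (Fin m) (Fin m) ℝ}
    (hg : ∀ i j, ContDiffOn ℝ (⊤ : ℕ∞) (fun y => g y i j) U)
    {y a b : ℝ → Fin m → ℝ} {y' a' b' : Fin m → ℝ} {T : Set ℝ} {t : ℝ} (hy : y t ∈ U)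
    (hy' : HasDerivWithinAt y y' T t) (ha : HasDerivWithinAt a a' T t)
    (hb : HasDerivWithinAt b b' T t) :
    HasDerivWithinAt (fun τ => dotp ((g (y τ)).mulVec (a τ)) (b τ))
      (metricDeriv g (y t) y' (a t) (b t) + dotp ((g (y t)).mulVec a') (b t)
        + dotp ((g (y t)).mulVec (a t)) b') T t := by
  have h : ∀ i j, HasDerivWithinAt (fun τ => g (y τ) i j * a τ j * b τ i)
      ((fderiv ℝ (fun z => g z i j) (y t) y' * a t j + g (y t) i j * a' j) * b t i
        + g (y t) i j * a t j * b' i) T t := by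
    intro i j
    have hgd : HasFDerivAt (fun z => g z i j) (fderiv ℝ (fun z => g z i j) (y t)) (y t) :=
      (((hg i j).contDiffAt (hU.mem_nhds hy)).differentiableAt (by simp)).hasFDerivAt
    have h1 := hgd.comp_hasDerivWithinAt t hy'
    exact (h1.mul (hasDerivWithinAt_pi.1 ha j)).mul (hasDerivWithinAt_pi.1 hb i)
  have h2 := HasDerivWithinAt.fun_sum (u := Finset.univ)
    (fun i _ => HasDerivWithinAt.fun_sum (u := Finset.univ) (fun j _ => h i j))
  simp only [dotp_mulVec]
  refine h2.congr_deriv ?_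
  simp only [metricDeriv, ← Finset.sum_add_distrib]
  refine Finset.sum_congr rfl fun i _ => Finset.sum_congr rfl fun j _ => ?_
  ring

/-- Uniform ellipticity of the metric on a compact set. -/
lemma exists_metric_lower_bound {m : ℕ} {U : Set (Fin m → ℝ)}
    {g : (Fin m → ℝ) → Matrix (Fin m) (Fin m) ℝ}
    (hg : ∀ i j, ContDiffOn ℝ (⊤ : ℕ∞) (fun y => g y i j) U)
    (hgpos : ∀ x ∈ U, (g x).PosDef) {C : Set (Fin m → ℝ)} (hC : IsCompact C) (hCU : C ⊆ U) :
    ∃ lam > 0, ∀ x ∈ C, ∀ a : Fin m → ℝ, lam * ‖a‖ ^ 2 ≤ dotp ((g x).mulVec a) a := by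
  have hcpt : IsCompact (C ×ˢ Metric.sphere (0 : Fin m → ℝ) 1) := hC.prod (isCompact_sphere 0 1)
  have hcont : ContinuousOn (fun z : (Fin m → ℝ) × (Fin m → ℝ) => dotp ((g z.1).mulVec z.2) z.2)
      (C ×ˢ Metric.sphere (0 : Fin m → ℝ) 1) := by
    simp only [dotp_mulVec]
    refine continuousOn_finsetSum _ fun i _ => continuousOn_finsetSum _ fun j _ => ?_
    have h1 : ContinuousOn (fun z : (Fin m → ℝ) × (Fin m → ℝ) => g z.1 i j)
        (C ×ˢ Metric.sphere (0 : Fin m → ℝ) 1) :=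
      (hg i j).continuousOn.comp continuousOn_fst fun z hz => hCU hz.1
    exact (h1.mul (by fun_prop)).mul (by fun_prop)
  have hlow : ∃ lam > 0, ∀ z ∈ C ×ˢ Metric.sphere (0 : Fin m → ℝ) 1,
      lam ≤ dotp ((g z.1).mulVec z.2) z.2 := by
    rcases (C ×ˢ Metric.sphere (0 : Fin m → ℝ) 1).eq_empty_or_nonempty with he | hne
    · exact ⟨1, one_pos, by simp [he]⟩
    · obtain ⟨z, hz, hmin⟩ := hcpt.exists_isMinOn hne hcont
      refine ⟨_, dotp_mulVec_pos (hgpos z.1 (hCU hz.1)) ?_, fun w hw => hmin hw⟩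
      rintro h0
      simpa [h0] using hz.2
  obtain ⟨lam, hlam, hl⟩ := hlow
  refine ⟨lam, hlam, fun x hx a => ?_⟩
  rcases eq_or_ne a 0 with rfl | ha
  · simp [dotp]
  have hna : 0 < ‖a‖ := norm_pos_iff.2 ha
  have := hl (x, ‖a‖⁻¹ • a) ⟨hx, by simp [norm_smul, hna.ne']⟩
  have e : dotp ((g x).mulVec (‖a‖⁻¹ • a)) (‖a‖⁻¹ • a)
      = ‖a‖⁻¹ ^ 2 * dotp ((g x).mulVec a) a := by
    simp only [dotp_mulVec, Finset.mul_sum, Pi.smul_apply, smul_eq_mul]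
    refine Finset.sum_congr rfl fun i _ => Finset.sum_congr rfl fun j _ => ?_
    ring
  rw [e] at this
  calc lam * ‖a‖ ^ 2 ≤ ‖a‖⁻¹ ^ 2 * dotp ((g x).mulVec a) a * ‖a‖ ^ 2 := by gcongr
    _ = _ := by field_simp

/-! ### The connecting map and its derivatives up to the boundary -/

/-- The domain `[0,1] × U × U` of the connecting map. -/
def chiDom {m : ℕ} (U : Set (Fin m → ℝ)) : Set (ℝ × (Fin m → ℝ) × (Fin m → ℝ)) :=
  Set.Icc (0 : ℝ) 1 ×ˢ U ×ˢ U

/-- The full derivative of the connecting map, taken within `[0,1] × U × U` so that it is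
one-sided in `s` (and independent of junk values outside the domain) at `s = 0` and `s = 1`. -/
noncomputable def dchi {m : ℕ} (χ : ℝ → (Fin m → ℝ) → (Fin m → ℝ) → (Fin m → ℝ))
    (U : Set (Fin m → ℝ)) (s : ℝ) (p q : Fin m → ℝ) :
    (ℝ × (Fin m → ℝ) × (Fin m → ℝ)) →L[ℝ] (Fin m → ℝ) :=
  fderivWithin ℝ (fun z : ℝ × (Fin m → ℝ) × (Fin m → ℝ) => χ z.1 z.2.1 z.2.2)
    (chiDom U) (s, p, q)

lemma uniqueDiffOn_chiDom {m : ℕ} {U : Set (Fin m → ℝ)} (hU : IsOpen U) :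
    UniqueDiffOn ℝ (chiDom U) :=
  (uniqueDiffOn_Icc zero_lt_one).prod (hU.uniqueDiffOn.prod hU.uniqueDiffOn)

lemma contDiffOn_dchi {m : ℕ} {U : Set (Fin m → ℝ)} (hU : IsOpen U)
    {χ : ℝ → (Fin m → ℝ) → (Fin m → ℝ) → (Fin m → ℝ)}
    (hχ : ContDiffOn ℝ (⊤ : ℕ∞)
      (fun z : ℝ × (Fin m → ℝ) × (Fin m → ℝ) => χ z.1 z.2.1 z.2.2) (chiDom U)) :
    ContDiffOn ℝ (⊤ : ℕ∞)
      (fun z : ℝ × (Fin m → ℝ) × (Fin m → ℝ) => dchi χ U z.1 z.2.1 z.2.2) (chiDom U) :=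
  hχ.fderivWithin (uniqueDiffOn_chiDom hU) (by simp)

lemma hasFDerivWithinAt_chi {m : ℕ} {U : Set (Fin m → ℝ)}
    {χ : ℝ → (Fin m → ℝ) → (Fin m → ℝ) → (Fin m → ℝ)}
    (hχ : ContDiffOn ℝ (⊤ : ℕ∞)
      (fun z : ℝ × (Fin m → ℝ) × (Fin m → ℝ) => χ z.1 z.2.1 z.2.2) (chiDom U))
    {s : ℝ} (hs : s ∈ Set.Icc (0 : ℝ) 1) {p q : Fin m → ℝ} (hp : p ∈ U) (hq : q ∈ U) :
    HasFDerivWithinAt (fun z : ℝ × (Fin m → ℝ) × (Fin m → ℝ) => χ z.1 z.2.1 z.2.2)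
      (dchi χ U s p q) (chiDom U) (s, p, q) :=
  ((hχ.differentiableOn (by simp)) (s, p, q) ⟨hs, hp, hq⟩).hasFDerivWithinAt

lemma hasDerivWithinAt_line {m : ℕ} (T : Set ℝ) (s : ℝ) (p q : Fin m → ℝ) :
    HasDerivWithinAt (fun s' : ℝ => (s', p, q)) (1, 0, 0) T s :=
  (hasDerivWithinAt_id s T).prodMk ((hasDerivWithinAt_const s T p).prodMk
    (hasDerivWithinAt_const s T q))

lemma hasDerivWithinAt_chi_s {m : ℕ} {U : Set (Fin m → ℝ)}
    {χ : ℝ → (Fin m → ℝ) → (Fin m → ℝ) → (Fin m → ℝ)}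
    (hχ : ContDiffOn ℝ (⊤ : ℕ∞)
      (fun z : ℝ × (Fin m → ℝ) × (Fin m → ℝ) => χ z.1 z.2.1 z.2.2) (chiDom U))
    {s : ℝ} (hs : s ∈ Set.Icc (0 : ℝ) 1) {p q : Fin m → ℝ} (hp : p ∈ U) (hq : q ∈ U) :
    HasDerivWithinAt (fun s' => χ s' p q) (dchi χ U s p q (1, 0, 0)) (Set.Icc 0 1) s := by
  have hmaps : Set.MapsTo (fun s' : ℝ => (s', p, q)) (Set.Icc 0 1) (chiDom U) :=
    fun r hr => ⟨hr, hp, hq⟩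
  exact HasFDerivWithinAt.comp_hasDerivWithinAt (f := fun s' : ℝ => (s', p, q)) s
    (hasFDerivWithinAt_chi hχ hs hp hq) (hasDerivWithinAt_line _ s p q) hmaps

lemma hasDerivAt_curves {m : ℕ} {y₁ y₂ : ℝ → Fin m → ℝ} {v w : Fin m → ℝ} {t : ℝ} (s : ℝ)
    (h₁ : HasDerivAt y₁ v t) (h₂ : HasDerivAt y₂ w t) :
    HasDerivAt (fun τ => (s, y₁ τ, y₂ τ)) (0, v, w) t :=
  (hasDerivAt_const t s).prodMk (h₁.prodMk h₂)

lemma eventually_mem_chiDom {m : ℕ} {U : Set (Fin m → ℝ)} (hU : IsOpen U)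
    {s : ℝ} (hs : s ∈ Set.Icc (0 : ℝ) 1) {y₁ y₂ : ℝ → Fin m → ℝ} {v w : Fin m → ℝ} {t : ℝ}
    (hp : y₁ t ∈ U) (hq : y₂ t ∈ U)
    (h₁ : HasDerivAt y₁ v t) (h₂ : HasDerivAt y₂ w t) :
    ∀ᶠ τ in nhds t, (s, y₁ τ, y₂ τ) ∈ chiDom U := by
  filter_upwards [h₁.continuousAt.preimage_mem_nhds (hU.mem_nhds hp),
    h₂.continuousAt.preimage_mem_nhds (hU.mem_nhds hq)] with τ a b
  exact ⟨hs, a, b⟩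

lemma hasDerivAt_chi_t {m : ℕ} {U : Set (Fin m → ℝ)} (hU : IsOpen U)
    {χ : ℝ → (Fin m → ℝ) → (Fin m → ℝ) → (Fin m → ℝ)}
    (hχ : ContDiffOn ℝ (⊤ : ℕ∞)
      (fun z : ℝ × (Fin m → ℝ) × (Fin m → ℝ) => χ z.1 z.2.1 z.2.2) (chiDom U))
    {s : ℝ} (hs : s ∈ Set.Icc (0 : ℝ) 1) {y₁ y₂ : ℝ → Fin m → ℝ} {v w : Fin m → ℝ} {t : ℝ}
    (hp : y₁ t ∈ U) (hq : y₂ t ∈ U)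
    (h₁ : HasDerivAt y₁ v t) (h₂ : HasDerivAt y₂ w t) :
    HasDerivAt (fun τ => χ s (y₁ τ) (y₂ τ)) (dchi χ U s (y₁ t) (y₂ t) (0, v, w)) t :=
  HasFDerivWithinAt.comp_hasDerivAt (f := fun τ => (s, y₁ τ, y₂ τ)) t
    (hasFDerivWithinAt_chi hχ hs hp hq) (hasDerivAt_curves s h₁ h₂)
    (eventually_mem_chiDom hU hs hp hq h₁ h₂)

/-- Equality of the mixed derivatives, `∂_s η = ∂_t ξ`, including at the endpoints of `[0,1]`. -/
lemma mixed_derivatives {m : ℕ} {U : Set (Fin m → ℝ)} (hU : IsOpen U)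
    {χ : ℝ → (Fin m → ℝ) → (Fin m → ℝ) → (Fin m → ℝ)}
    (hχ : ContDiffOn ℝ (⊤ : ℕ∞)
      (fun z : ℝ × (Fin m → ℝ) × (Fin m → ℝ) => χ z.1 z.2.1 z.2.2) (chiDom U))
    {s : ℝ} (hs : s ∈ Set.Icc (0 : ℝ) 1) {y₁ y₂ : ℝ → Fin m → ℝ} {v w : Fin m → ℝ} {t : ℝ}
    (hp : y₁ t ∈ U) (hq : y₂ t ∈ U)
    (h₁ : HasDerivAt y₁ v t) (h₂ : HasDerivAt y₂ w t) :
    ∃ d : Fin m → ℝ,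
      HasDerivWithinAt (fun s' => dchi χ U s' (y₁ t) (y₂ t) (0, v, w)) d (Set.Icc 0 1) s ∧
      HasDerivAt (fun τ => dchi χ U s (y₁ τ) (y₂ τ) (1, 0, 0)) d t := by
  have hmem : (s, y₁ t, y₂ t) ∈ chiDom U := ⟨hs, hp, hq⟩
  have hcl : (s, y₁ t, y₂ t) ∈ closure (interior (chiDom U)) := by
    rw [chiDom, interior_prod_eq, interior_prod_eq, closure_prod_eq, closure_prod_eq,
      interior_Icc, closure_Ioo zero_ne_one, hU.interior_eq]
    exact ⟨hs, subset_closure hp, subset_closure hq⟩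
  have hsymm := (hχ _ hmem).isSymmSndFDerivWithinAt
    (by rw [minSmoothness_of_isRCLikeNormedField]; exact WithTop.coe_le_coe.2 (le_top : (2 : ℕ∞) ≤ ⊤))
    (uniqueDiffOn_chiDom hU) hcl hmem
  have hD := (((contDiffOn_dchi hU hχ).differentiableOn (by simp)) _ hmem).hasFDerivWithinAt
  set D2 := fderivWithin ℝ
    (fun z : ℝ × (Fin m → ℝ) × (Fin m → ℝ) => dchi χ U z.1 z.2.1 z.2.2) (chiDom U)
    (s, y₁ t, y₂ t) with hD2
  refine ⟨D2 (1, 0, 0) (0, v, w), ?_, ?_⟩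
  · have hmaps : Set.MapsTo (fun s' : ℝ => (s', y₁ t, y₂ t)) (Set.Icc 0 1) (chiDom U) :=
      fun r hr => ⟨hr, hp, hq⟩
    have h := HasFDerivWithinAt.comp_hasDerivWithinAt (f := fun s' : ℝ => (s', y₁ t, y₂ t)) s
      hD (hasDerivWithinAt_line (Set.Icc 0 1) s (y₁ t) (y₂ t)) hmaps
    simpa using h.clm_apply (hasDerivWithinAt_const s (Set.Icc (0:ℝ) 1)
      ((0, v, w) : ℝ × (Fin m → ℝ) × (Fin m → ℝ)))
  · have h := HasFDerivWithinAt.comp_hasDerivAt (f := fun τ => (s, y₁ τ, y₂ τ)) t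
      hD (hasDerivAt_curves s h₁ h₂)
      (eventually_mem_chiDom hU hs hp hq h₁ h₂)
    have h3 := h.clm_apply (hasDerivAt_const t
      ((1, 0, 0) : ℝ × (Fin m → ℝ) × (Fin m → ℝ)))
    have e : D2 (1, 0, 0) (0, v, w) = D2 (0, v, w) (1, 0, 0) := hsymm _ _
    rw [e]
    simpa using h3

/-! ### The Lagrangian density along the connecting map -/

/-- The Lagrangian density `½(g(χ)η,η) + W(φ,χ)` at parameter `s`, as a function of the 1-jets
`(p,v)` and `(q,w)` of the two curves being connected. -/
noncomputable def lag {k m : ℕ} (g : (Fin m → ℝ) → Matrix (Fin m) (Fin m) ℝ)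
    (W : (Fin k → ℝ) → (Fin m → ℝ) → ℝ)
    (χ : ℝ → (Fin m → ℝ) → (Fin m → ℝ) → (Fin m → ℝ)) (U : Set (Fin m → ℝ))
    (φ : Fin k → ℝ) (p q v w : Fin m → ℝ) (s : ℝ) : ℝ :=
  (1 / 2) * dotp ((g (χ s p q)).mulVec (dchi χ U s p q (0, v, w))) (dchi χ U s p q (0, v, w))
    + W φ (χ s p q)

lemma contDiffOn_lag {k m : ℕ} {U : Set (Fin m → ℝ)} (hU : IsOpen U)
    {g : (Fin m → ℝ) → Matrix (Fin m) (Fin m) ℝ}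
    (hg : ∀ i j, ContDiffOn ℝ (⊤ : ℕ∞) (fun y => g y i j) U)
    {W : (Fin k → ℝ) → (Fin m → ℝ) → ℝ}
    (hW : ContDiffOn ℝ (⊤ : ℕ∞) (fun p : (Fin k → ℝ) × (Fin m → ℝ) => W p.1 p.2)
      (Set.univ ×ˢ U))
    {χ : ℝ → (Fin m → ℝ) → (Fin m → ℝ) → (Fin m → ℝ)}
    (hχ : ContDiffOn ℝ (⊤ : ℕ∞)
      (fun z : ℝ × (Fin m → ℝ) × (Fin m → ℝ) => χ z.1 z.2.1 z.2.2) (chiDom U))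
    (hχU : ∀ s ∈ Set.Icc (0:ℝ) 1, ∀ x ∈ U, ∀ y ∈ U, χ s x y ∈ U)
    (φ : Fin k → ℝ) {p q : Fin m → ℝ} (hp : p ∈ U) (hq : q ∈ U) (v w : Fin m → ℝ) :
    ContDiffOn ℝ (⊤ : ℕ∞) (lag g W χ U φ p q v w) (Set.Icc 0 1) := by
  have hline : ContDiffOn ℝ (⊤ : ℕ∞) (fun s : ℝ => (s, p, q)) (Set.Icc 0 1) := by fun_prop
  have hmaps : Set.MapsTo (fun s : ℝ => (s, p, q)) (Set.Icc 0 1) (chiDom U) :=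
    fun s hs => ⟨hs, hp, hq⟩
  have h1 : ContDiffOn ℝ (⊤ : ℕ∞) (fun s => χ s p q) (Set.Icc 0 1) := hχ.comp hline hmaps
  have h2 : ContDiffOn ℝ (⊤ : ℕ∞) (fun s => dchi χ U s p q) (Set.Icc 0 1) :=
    (contDiffOn_dchi hU hχ).comp hline hmaps
  have h3 : ContDiffOn ℝ (⊤ : ℕ∞) (fun s => dchi χ U s p q (0, v, w)) (Set.Icc 0 1) :=
    h2.clm_apply contDiffOn_const
  have h4 : ∀ i, ContDiffOn ℝ (⊤ : ℕ∞) (fun s => dchi χ U s p q (0, v, w) i) (Set.Icc 0 1) :=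
    contDiffOn_pi.1 h3
  have h5 : ContDiffOn ℝ (⊤ : ℕ∞) (fun s => W φ (χ s p q)) (Set.Icc 0 1) :=
    hW.comp (contDiffOn_const.prodMk h1) fun s hs => ⟨trivial, hχU s hs p hp q hq⟩
  have h6 : ∀ i j, ContDiffOn ℝ (⊤ : ℕ∞) (fun s => g (χ s p q) i j) (Set.Icc 0 1) :=
    fun i j => (hg i j).comp h1 fun s hs => hχU s hs p hp q hq
  unfold lag
  simp only [dotp_mulVec]
  exact (contDiffOn_const.mul (ContDiffOn.sum fun i _ => ContDiffOn.sum fun j _ =>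
    ((h6 i j).mul (h4 j)).mul (h4 i))).add h5

/-- At an endpoint `σ` where `χ(σ,x₁,x₂)` is a solution `y` of the Euler–Lagrange equations, the
first variation of the Lagrangian density is the exact time derivative of `(g(y)ẏ, ξ)`. -/
lemma hasDerivAt_momentum {k m : ℕ} {U : Set (Fin m → ℝ)} (hU : IsOpen U)
    {g : (Fin m → ℝ) → Matrix (Fin m) (Fin m) ℝ}
    (hg : ∀ i j, ContDiffOn ℝ (⊤ : ℕ∞) (fun y => g y i j) U)
    (hgpos : ∀ x ∈ U, (g x).PosDef)
    {W : (Fin k → ℝ) → (Fin m → ℝ) → ℝ}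
    (hW : ContDiffOn ℝ (⊤ : ℕ∞) (fun p : (Fin k → ℝ) × (Fin m → ℝ) => W p.1 p.2)
      (Set.univ ×ˢ U))
    {χ : ℝ → (Fin m → ℝ) → (Fin m → ℝ) → (Fin m → ℝ)}
    (hχ : ContDiffOn ℝ (⊤ : ℕ∞)
      (fun z : ℝ × (Fin m → ℝ) × (Fin m → ℝ) => χ z.1 z.2.1 z.2.2) (chiDom U))
    {σ : ℝ} (hσ : σ ∈ Set.Icc (0:ℝ) 1) (φ : Fin k → ℝ)
    {x₁ x₂ y : ℝ → Fin m → ℝ} (hx₁ : Differentiable ℝ x₁) (hx₂ : Differentiable ℝ x₂)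
    (hy : ContDiff ℝ 2 y) (hx₁U : ∀ t, x₁ t ∈ U) (hx₂U : ∀ t, x₂ t ∈ U) (hyU : ∀ t, y t ∈ U)
    (hend : ∀ t, χ σ (x₁ t) (x₂ t) = y t) (t : ℝ)
    (hEL : deriv (deriv y) t + christoffel g (y t) (deriv y t) (deriv y t)
        = Matrix.mulVec (g (y t))⁻¹ (gradW W φ (y t))) :
    HasDerivAt
      (fun τ => dotp ((g (y τ)).mulVec (deriv y τ)) (dchi χ U σ (x₁ τ) (x₂ τ) (1, 0, 0)))
      (derivWithin (lag g W χ U φ (x₁ t) (x₂ t) (deriv x₁ t) (deriv x₂ t)) (Set.Icc 0 1) σ) t := by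
  have h1 := (hx₁ t).hasDerivAt
  have h2 := (hx₂ t).hasDerivAt
  have hyd : HasDerivAt y (deriv y t) t := (hy.differentiable (by simp) t).hasDerivAt
  have hydd : HasDerivAt (deriv y) (deriv (deriv y) t) t :=
    ((((contDiff_succ_iff_deriv (n := 1)).1 hy).2.2.differentiable (by simp)) t).hasDerivAt
  obtain ⟨d, hd1, hd2⟩ := mixed_derivatives hU hχ hσ (hx₁U t) (hx₂U t) h1 h2
  have hη : dchi χ U σ (x₁ t) (x₂ t) (0, deriv x₁ t, deriv x₂ t) = deriv y t := by
    have h := hasDerivAt_chi_t hU hχ hσ (hx₁U t) (hx₂U t) h1 h2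
    simp only [hend] at h
    exact h.unique hyd
  set ξ := dchi χ U σ (x₁ t) (x₂ t) (1, 0, 0) with hξ
  have hs := hasDerivWithinAt_chi_s hχ hσ (hx₁U t) (hx₂U t)
  have hG := hasDerivWithinAt_metric hU hg (by rw [hend]; exact hyU t) hs hd1 hd1
  have hWd : HasFDerivAt (W φ) (fderiv ℝ (W φ) (y t)) (y t) := by
    have hc : ContDiffAt ℝ (⊤ : ℕ∞) (fun p : (Fin k → ℝ) × (Fin m → ℝ) => W p.1 p.2) (φ, y t) :=
      hW.contDiffAt ((isOpen_univ.prod hU).mem_nhds ⟨trivial, hyU t⟩)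
    have hc2 : ContDiffAt ℝ (⊤ : ℕ∞) (W φ) (y t) :=
      hc.comp (y t) (contDiffAt_const.prodMk contDiffAt_id)
    exact (hc2.differentiableAt (by simp)).hasFDerivAt
  rw [← hend t] at hWd
  have hWs := hWd.comp_hasDerivWithinAt σ hs
  have hlag := ((hG.const_mul (1 / 2)).add hWs).derivWithin
    (uniqueDiffOn_Icc (zero_lt_one (α := ℝ)) σ hσ)
  have hlag' : derivWithin (lag g W χ U φ (x₁ t) (x₂ t) (deriv x₁ t) (deriv x₂ t))
      (Set.Icc 0 1) σ = _ := hlag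
  rw [hlag', hend, hη, ← hξ]
  have hm := hasDerivWithinAt_metric hU hg (hyU t) (hyd.hasDerivWithinAt (s := Set.univ))
    hydd.hasDerivWithinAt hd2.hasDerivWithinAt
  rw [hasDerivWithinAt_univ] at hm
  refine hm.congr_deriv ?_
  have hdet : IsUnit (g (y t)).det := (hgpos _ (hyU t)).det_pos.ne'.isUnit
  have hEL' := congrArg (fun z => dotp ((g (y t)).mulVec z) ξ) hEL
  simp only [dotp_mulVec_add, dotp_mulVec_christoffel hU hgpos (hyU t), Matrix.mulVec_mulVec,
    Matrix.mul_nonsing_inv _ hdet, Matrix.one_mulVec] at hEL'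
  have hgr : fderiv ℝ (W φ) (y t) ξ = dotp (gradW W φ (y t)) ξ := fderiv_eq_sum_pd _ _ _
  rw [hgr, dotp_mulVec_comm (hgpos _ (hyU t)).1 d (deriv y t)]
  linarith

/-- A smooth curve in the open set `U` with prescribed value and velocity at time `0`. -/
lemma exists_curve {m : ℕ} {U : Set (Fin m → ℝ)} (hU : IsOpen U) {p : Fin m → ℝ} (hp : p ∈ U)
    (v : Fin m → ℝ) :
    ∃ y : ℝ → Fin m → ℝ, ContDiff ℝ (⊤ : ℕ∞) y ∧ (∀ t, y t ∈ U) ∧ y 0 = p ∧ HasDerivAt y v 0 := by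
  obtain ⟨r, hr, hball⟩ := Metric.isOpen_iff.1 hU p hp
  -- The oscillation `ε sin(t/ε) v` has velocity `v` at `0` and norm at most `ε ‖v‖ < r`.
  set ε : ℝ := r / (‖v‖ + 1) with hε
  have hv : 0 < ‖v‖ + 1 := by positivity
  have hεpos : 0 < ε := by positivity
  refine ⟨fun t => p + (ε * Real.sin (t / ε)) • v, ?_, fun t => hball ?_, by simp, ?_⟩
  · fun_prop
  · rw [Metric.mem_ball, dist_eq_norm, add_sub_cancel_left, norm_smul, norm_mul,
      Real.norm_of_nonneg hεpos.le, Real.norm_eq_abs]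
    calc ε * |Real.sin (t / ε)| * ‖v‖ ≤ ε * 1 * ‖v‖ := by
          gcongr
          exact Real.abs_sin_le_one _
      _ < ε * (‖v‖ + 1) := by nlinarith
      _ = r := by rw [hε]; field_simp
  · have h1 : HasDerivAt (fun t : ℝ => t / ε) (1 / ε) 0 := (hasDerivAt_id 0).div_const ε
    have h2 := ((h1.sin.const_mul ε).smul_const v).const_add p
    refine h2.congr_deriv ?_
    simp [hεpos.ne']

/-- The convexity property of the Lagrangian density along `χ`, for pairs of smooth curves. -/
def ConvexAlong {k m : ℕ} (ω : Fin k → ℝ) (U : Set (Fin m → ℝ))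
    (g : (Fin m → ℝ) → Matrix (Fin m) (Fin m) ℝ) (W : (Fin k → ℝ) → (Fin m → ℝ) → ℝ) (κ : ℝ)
    (χ : ℝ → (Fin m → ℝ) → (Fin m → ℝ) → (Fin m → ℝ)) : Prop :=
  ∀ x₁ x₂ : ℝ → (Fin m → ℝ), ContDiff ℝ (⊤ : ℕ∞) x₁ → ContDiff ℝ (⊤ : ℕ∞) x₂ →
    (∀ t, x₁ t ∈ U) → (∀ t, x₂ t ∈ U) → ∀ φ : Fin k → ℝ,
    ∀ s ∈ Set.Icc (0:ℝ) 1, ∀ t : ℝ,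
      κ * (dotp
            (Matrix.mulVec (g (χ s (x₁ t) (x₂ t)))
              (deriv (fun s' : ℝ => etaF χ x₁ x₂ s' t) s
                + christoffel g (χ s (x₁ t) (x₂ t)) (xiF χ x₁ x₂ s t) (etaF χ x₁ x₂ s t)))
            (deriv (fun s' : ℝ => etaF χ x₁ x₂ s' t) s
                + christoffel g (χ s (x₁ t) (x₂ t)) (xiF χ x₁ x₂ s t) (etaF χ x₁ x₂ s t))
          + dotp (Matrix.mulVec (g (χ s (x₁ t) (x₂ t))) (xiF χ x₁ x₂ s t))
              (xiF χ x₁ x₂ s t)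
            * (dotp (Matrix.mulVec (g (χ s (x₁ t) (x₂ t))) (etaF χ x₁ x₂ s t))
                (etaF χ x₁ x₂ s t) + 1))
        ≤ deriv (deriv (fun s' : ℝ =>
            (1 / 2) * dotp (Matrix.mulVec (g (χ s' (x₁ t) (x₂ t))) (etaF χ x₁ x₂ s' t))
                (etaF χ x₁ x₂ s' t)
              + W (φ + t • ω) (χ s' (x₁ t) (x₂ t)))) s

/-- The convexity property depends only on the 1-jets of the two curves, so it bounds the second
`s`-derivative of `lag` for arbitrary jets; only the term `‖ξ‖_g²` is retained. -/
lemma le_deriv_lag {k m : ℕ} {ω : Fin k → ℝ} {U : Set (Fin m → ℝ)} (hU : IsOpen U)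
    {g : (Fin m → ℝ) → Matrix (Fin m) (Fin m) ℝ} (hgpos : ∀ x ∈ U, (g x).PosDef)
    {W : (Fin k → ℝ) → (Fin m → ℝ) → ℝ} {κ : ℝ} (hκ : 0 < κ)
    {χ : ℝ → (Fin m → ℝ) → (Fin m → ℝ) → (Fin m → ℝ)}
    (hχ : ContDiffOn ℝ (⊤ : ℕ∞)
      (fun z : ℝ × (Fin m → ℝ) × (Fin m → ℝ) => χ z.1 z.2.1 z.2.2) (chiDom U))
    (hχU : ∀ s ∈ Set.Icc (0:ℝ) 1, ∀ x ∈ U, ∀ y ∈ U, χ s x y ∈ U)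
    (hconv : ConvexAlong ω U g W κ χ)
    (φ : Fin k → ℝ) {p q : Fin m → ℝ} (hp : p ∈ U) (hq : q ∈ U) (v w : Fin m → ℝ)
    {s : ℝ} (hs : s ∈ Set.Ioo (0:ℝ) 1) :
    κ * dotp ((g (χ s p q)).mulVec (dchi χ U s p q (1, 0, 0))) (dchi χ U s p q (1, 0, 0))
      ≤ deriv (derivWithin (lag g W χ U φ p q v w) (Set.Icc 0 1)) s := by
  obtain ⟨y₁, hy₁, hy₁U, rfl, hv⟩ := exists_curve hU hp v
  obtain ⟨y₂, hy₂, hy₂U, rfl, hw⟩ := exists_curve hU hq w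
  have hsI : s ∈ Set.Icc (0:ℝ) 1 := Set.Ioo_subset_Icc_self hs
  have hη : ∀ r ∈ Set.Icc (0:ℝ) 1,
      etaF χ y₁ y₂ r 0 = dchi χ U r (y₁ 0) (y₂ 0) (0, v, w) := fun r hr =>
    (hasDerivAt_chi_t hU hχ hr hp hq hv hw).deriv
  have hξ : xiF χ y₁ y₂ s 0 = dchi χ U s (y₁ 0) (y₂ 0) (1, 0, 0) :=
    ((hasDerivWithinAt_chi_s hχ hsI hp hq).hasDerivAt (Icc_mem_nhds hs.1 hs.2)).deriv
  have hL := hconv y₁ y₂ hy₁ hy₂ hy₁U hy₂U φ s hsI 0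
  have hder : deriv (deriv (fun s' : ℝ =>
      (1 / 2) * dotp (Matrix.mulVec (g (χ s' (y₁ 0) (y₂ 0))) (etaF χ y₁ y₂ s' 0))
          (etaF χ y₁ y₂ s' 0)
        + W (φ + (0:ℝ) • ω) (χ s' (y₁ 0) (y₂ 0)))) s
      = deriv (derivWithin (lag g W χ U φ (y₁ 0) (y₂ 0) v w) (Set.Icc 0 1)) s := by
    apply Filter.EventuallyEq.deriv_eq
    filter_upwards [isOpen_Ioo.mem_nhds hs] with r hr
    rw [derivWithin_of_mem_nhds (Icc_mem_nhds hr.1 hr.2)]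
    apply Filter.EventuallyEq.deriv_eq
    filter_upwards [Icc_mem_nhds hr.1 hr.2] with r' hr'
    rw [hη r' hr', lag, zero_smul, add_zero]
  rw [hder, hξ] at hL
  refine le_trans ?_ hL
  have hgx := hgpos _ (hχU s hsI _ hp _ hq)
  refine mul_le_mul_of_nonneg_left ?_ hκ.le
  have n1 := dotp_mulVec_nonneg hgx (deriv (fun s' : ℝ => etaF χ y₁ y₂ s' 0) s
    + christoffel g (χ s (y₁ 0) (y₂ 0)) (dchi χ U s (y₁ 0) (y₂ 0) (1, 0, 0))
      (etaF χ y₁ y₂ s 0))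
  have n2 := dotp_mulVec_nonneg hgx (dchi χ U s (y₁ 0) (y₂ 0) (1, 0, 0))
  have n3 := dotp_mulVec_nonneg hgx (etaF χ y₁ y₂ s 0)
  have n4 := mul_nonneg n2 n3
  linarith

/-- The increment of the first variation over `[0,1]` controls the displacement of the whole path
`s ↦ χ(s,p,q)` from its starting point. -/
lemma sq_displacement_le {k m : ℕ} {ω : Fin k → ℝ} {U : Set (Fin m → ℝ)} (hU : IsOpen U)
    {g : (Fin m → ℝ) → Matrix (Fin m) (Fin m) ℝ}
    (hg : ∀ i j, ContDiffOn ℝ (⊤ : ℕ∞) (fun y => g y i j) U)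
    (hgpos : ∀ x ∈ U, (g x).PosDef)
    {W : (Fin k → ℝ) → (Fin m → ℝ) → ℝ}
    (hW : ContDiffOn ℝ (⊤ : ℕ∞) (fun p : (Fin k → ℝ) × (Fin m → ℝ) => W p.1 p.2)
      (Set.univ ×ˢ U)) {κ : ℝ} (hκ : 0 < κ)
    {χ : ℝ → (Fin m → ℝ) → (Fin m → ℝ) → (Fin m → ℝ)}
    (hχ : ContDiffOn ℝ (⊤ : ℕ∞)
      (fun z : ℝ × (Fin m → ℝ) × (Fin m → ℝ) => χ z.1 z.2.1 z.2.2) (chiDom U))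
    (hχU : ∀ s ∈ Set.Icc (0:ℝ) 1, ∀ x ∈ U, ∀ y ∈ U, χ s x y ∈ U)
    (hχ0 : ∀ x ∈ U, ∀ y ∈ U, χ 0 x y = x)
    (hconv : ConvexAlong ω U g W κ χ)
    (φ : Fin k → ℝ) {p q : Fin m → ℝ} (hp : p ∈ U) (hq : q ∈ U) (v w : Fin m → ℝ)
    {lam : ℝ} (hlam : 0 < lam)
    (hl : ∀ s ∈ Set.Icc (0:ℝ) 1, ∀ a : Fin m → ℝ,
      lam * ‖a‖ ^ 2 ≤ dotp ((g (χ s p q)).mulVec a) a)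
    {s : ℝ} (hs : s ∈ Set.Icc (0:ℝ) 1) (i : Fin m) :
    κ * lam * (χ s p q i - p i) ^ 2
      ≤ derivWithin (lag g W χ U φ p q v w) (Set.Icc 0 1) 1
        - derivWithin (lag g W χ U φ p q v w) (Set.Icc 0 1) 0 := by
  set f₁ := derivWithin (lag g W χ U φ p q v w) (Set.Icc 0 1) with hf₁
  have hf₁s : ContDiffOn ℝ (⊤ : ℕ∞) f₁ (Set.Icc 0 1) :=
    (contDiffOn_lag hU hg hW hχ hχU φ hp hq v w).derivWithin
      (uniqueDiffOn_Icc zero_lt_one) (by simp)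
  have hf₁d : ∀ r ∈ Set.Ioo (0:ℝ) 1, HasDerivAt f₁ (deriv f₁ r) r := fun r hr =>
    ((hf₁s.contDiffAt (Icc_mem_nhds hr.1 hr.2)).differentiableAt (by simp)).hasDerivAt
  have hχi : ∀ r ∈ Set.Icc (0:ℝ) 1, HasDerivWithinAt (fun s' => χ s' p q i)
      (dchi χ U r p q (1, 0, 0) i) (Set.Icc 0 1) r := fun r hr =>
    hasDerivWithinAt_pi.1 (hasDerivWithinAt_chi_s hχ hr hp hq) i
  -- Integrating `f₁' ≥ κ λ ξᵢ² ≥ κ λ (2 c ξᵢ - c²)` for a constant `c`.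
  have hmono : ∀ c : ℝ, MonotoneOn
      (fun r => f₁ r - κ * lam * (2 * c * χ r p q i - c ^ 2 * r)) (Set.Icc 0 1) := by
    intro c
    have hcont : ContinuousOn (fun r => χ r p q i) (Set.Icc 0 1) := fun r hr =>
      (hχi r hr).continuousWithinAt
    have hd : ∀ r ∈ Set.Ioo (0:ℝ) 1, HasDerivAt
        (fun r => f₁ r - κ * lam * (2 * c * χ r p q i - c ^ 2 * r))
        (deriv f₁ r - κ * lam * (2 * c * dchi χ U r p q (1, 0, 0) i - c ^ 2 * 1)) r := by
      intro r hr
      have h1 := (hχi r (Set.Ioo_subset_Icc_self hr)).hasDerivAt (Icc_mem_nhds hr.1 hr.2)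
      exact (hf₁d r hr).sub (((h1.const_mul (2 * c)).sub
        ((hasDerivAt_id r).const_mul (c ^ 2))).const_mul (κ * lam))
    refine monotoneOn_of_deriv_nonneg (convex_Icc 0 1) ?_ ?_ ?_
    · have := hf₁s.continuousOn
      fun_prop
    · rw [interior_Icc]
      exact fun r hr => (hd r hr).differentiableAt.differentiableWithinAt
    · rw [interior_Icc]
      intro r hr
      rw [(hd r hr).deriv]
      have h1 := le_deriv_lag hU hgpos hκ hχ hχU hconv φ hp hq v w hr
      have h2 := hl r (Set.Ioo_subset_Icc_self hr) (dchi χ U r p q (1, 0, 0))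
      set ξ := dchi χ U r p q (1, 0, 0)
      have h3 : ξ i ^ 2 ≤ ‖ξ‖ ^ 2 := by
        rw [← sq_abs]
        have := norm_le_pi_norm ξ i
        rw [Real.norm_eq_abs] at this
        gcongr
      have h4 : lam * (2 * c * ξ i - c ^ 2 * 1) ≤ lam * ‖ξ‖ ^ 2 := by
        gcongr
        nlinarith [sq_nonneg (ξ i - c)]
      have h5 := mul_le_mul_of_nonneg_left (h4.trans h2) hκ.le
      rw [mul_assoc]
      linarith
  have m1 := hmono (χ s p q i - p i) (Set.left_mem_Icc.2 zero_le_one) hs hs.1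
  have m2 := hmono 0 hs (Set.right_mem_Icc.2 zero_le_one) hs.2
  simp only [hχ0 p hp q hq] at m1
  simp only [mul_zero, zero_mul, ne_eq, OfNat.ofNat_ne_zero, not_false_eq_true, zero_pow,
    sub_zero] at m1 m2
  have h6 : 0 ≤ κ * lam * ((χ s p q i - p i) ^ 2 * (1 - s)) :=
    mul_nonneg (by positivity) (mul_nonneg (sq_nonneg _) (by linarith [hs.2]))
  nlinarith

/-! ### Compactness and the final ODE argument -/

/-- The momentum pairing `(g(q)w, ξ(1)) - (g(p)v, ξ(0))` as a function of the pair of 1-jets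
`(p,q,v,w)`. -/
noncomputable def pairing {m : ℕ} (g : (Fin m → ℝ) → Matrix (Fin m) (Fin m) ℝ)
    (χ : ℝ → (Fin m → ℝ) → (Fin m → ℝ) → (Fin m → ℝ)) (U : Set (Fin m → ℝ))
    (z : (Fin m → ℝ) × (Fin m → ℝ) × (Fin m → ℝ) × (Fin m → ℝ)) : ℝ :=
  dotp ((g z.2.1).mulVec z.2.2.2) (dchi χ U 1 z.1 z.2.1 (1, 0, 0))
    - dotp ((g z.1).mulVec z.2.2.1) (dchi χ U 0 z.1 z.2.1 (1, 0, 0))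

lemma continuousOn_pairing {m : ℕ} {U : Set (Fin m → ℝ)} (hU : IsOpen U)
    {g : (Fin m → ℝ) → Matrix (Fin m) (Fin m) ℝ}
    (hg : ∀ i j, ContDiffOn ℝ (⊤ : ℕ∞) (fun y => g y i j) U)
    {χ : ℝ → (Fin m → ℝ) → (Fin m → ℝ) → (Fin m → ℝ)}
    (hχ : ContDiffOn ℝ (⊤ : ℕ∞)
      (fun z : ℝ × (Fin m → ℝ) × (Fin m → ℝ) => χ z.1 z.2.1 z.2.2) (chiDom U)) :
    ContinuousOn (pairing g χ U) (U ×ˢ U ×ˢ Set.univ) := by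
  have hξ : ∀ σ ∈ Set.Icc (0:ℝ) 1, ∀ i, ContinuousOn
      (fun z : (Fin m → ℝ) × (Fin m → ℝ) × (Fin m → ℝ) × (Fin m → ℝ) =>
        dchi χ U σ z.1 z.2.1 (1, 0, 0) i) (U ×ˢ U ×ˢ Set.univ) := by
    intro σ hσ i
    have h1 : ContinuousOn (fun z : (Fin m → ℝ) × (Fin m → ℝ) × (Fin m → ℝ) × (Fin m → ℝ) =>
        dchi χ U σ z.1 z.2.1) (U ×ˢ U ×ˢ Set.univ) :=
      (contDiffOn_dchi hU hχ).continuousOn.comp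
        (f := fun z : (Fin m → ℝ) × (Fin m → ℝ) × (Fin m → ℝ) × (Fin m → ℝ) => (σ, z.1, z.2.1))
        (by fun_prop) fun z hz => ⟨hσ, hz.1, hz.2.1⟩
    exact continuousOn_pi.1 (h1.clm_apply continuousOn_const) i
  have hg1 : ∀ i j, ContinuousOn
      (fun z : (Fin m → ℝ) × (Fin m → ℝ) × (Fin m → ℝ) × (Fin m → ℝ) => g z.1 i j)
      (U ×ˢ U ×ˢ Set.univ) := fun i j =>
    (hg i j).continuousOn.comp (by fun_prop) fun z hz => hz.1
  have hg2 : ∀ i j, ContinuousOn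
      (fun z : (Fin m → ℝ) × (Fin m → ℝ) × (Fin m → ℝ) × (Fin m → ℝ) => g z.2.1 i j)
      (U ×ˢ U ×ˢ Set.univ) := fun i j =>
    (hg i j).continuousOn.comp (by fun_prop) fun z hz => hz.2.1
  unfold pairing
  simp only [dotp_mulVec]
  refine ContinuousOn.sub ?_ ?_
  · exact continuousOn_finsetSum _ fun i _ => continuousOn_finsetSum _ fun j _ =>
      ((hg2 i j).mul (by fun_prop)).mul (hξ 1 (Set.right_mem_Icc.2 zero_le_one) i)
  · exact continuousOn_finsetSum _ fun i _ => continuousOn_finsetSum _ fun j _ =>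
      ((hg1 i j).mul (by fun_prop)).mul (hξ 0 (Set.left_mem_Icc.2 zero_le_one) i)

/-- A path `s ↦ χ(s,p,q)` that never leaves `p` has `ξ = 0`, hence zero momentum pairing. -/
lemma pairing_eq_zero {m : ℕ} {U : Set (Fin m → ℝ)}
    {g : (Fin m → ℝ) → Matrix (Fin m) (Fin m) ℝ}
    {χ : ℝ → (Fin m → ℝ) → (Fin m → ℝ) → (Fin m → ℝ)}
    (hχ : ContDiffOn ℝ (⊤ : ℕ∞)
      (fun z : ℝ × (Fin m → ℝ) × (Fin m → ℝ) => χ z.1 z.2.1 z.2.2) (chiDom U))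
    {z : (Fin m → ℝ) × (Fin m → ℝ) × (Fin m → ℝ) × (Fin m → ℝ)} (hp : z.1 ∈ U) (hq : z.2.1 ∈ U)
    (hconst : ∀ s ∈ Set.Icc (0:ℝ) 1, ∀ i, χ s z.1 z.2.1 i = z.1 i) :
    pairing g χ U z = 0 := by
  have hξ : ∀ σ ∈ Set.Icc (0:ℝ) 1, dchi χ U σ z.1 z.2.1 (1, 0, 0) = 0 := by
    intro σ hσ
    have h1 := hasDerivWithinAt_chi_s hχ hσ hp hq
    have h2 : HasDerivWithinAt (fun s => χ s z.1 z.2.1) 0 (Set.Icc 0 1) σ :=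
      (hasDerivWithinAt_const σ _ z.1).congr (fun s hs => funext (hconst s hs))
        (funext (hconst σ hσ))
    exact (uniqueDiffOn_Icc (zero_lt_one (α := ℝ)) σ hσ).eq_deriv _ h1 h2
  simp [pairing, hξ 0 (Set.left_mem_Icc.2 zero_le_one), hξ 1 (Set.right_mem_Icc.2 zero_le_one),
    dotp]

/-- On a compact set of jets, a momentum pairing bounded away from `0` forces a displacement of
the path `s ↦ χ(s,p,q)` bounded away from `0`. -/
lemma exists_displacement {m : ℕ} {U : Set (Fin m → ℝ)} (hU : IsOpen U)
    {g : (Fin m → ℝ) → Matrix (Fin m) (Fin m) ℝ}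
    (hg : ∀ i j, ContDiffOn ℝ (⊤ : ℕ∞) (fun y => g y i j) U)
    {χ : ℝ → (Fin m → ℝ) → (Fin m → ℝ) → (Fin m → ℝ)}
    (hχ : ContDiffOn ℝ (⊤ : ℕ∞)
      (fun z : ℝ × (Fin m → ℝ) × (Fin m → ℝ) => χ z.1 z.2.1 z.2.2) (chiDom U))
    {J : Set ((Fin m → ℝ) × (Fin m → ℝ) × (Fin m → ℝ) × (Fin m → ℝ))} (hJ : IsCompact J)
    (hJU : J ⊆ U ×ˢ U ×ˢ Set.univ) {ε : ℝ} (hε : 0 < ε) :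
    ∃ δ > 0, ∀ z ∈ J, ε ≤ |pairing g χ U z| →
      ∃ s ∈ Set.Icc (0:ℝ) 1, ∃ i, δ ≤ (χ s z.1 z.2.1 i - z.1 i) ^ 2 := by
  have hA : ContinuousOn (fun z => |pairing g χ U z|) J :=
    ((continuousOn_pairing hU hg hχ).mono hJU).abs
  have hcl := hA.preimage_isClosed_of_isClosed hJ.isClosed (isClosed_Ici (a := ε))
  have hcpt : IsCompact (J ∩ (fun z => |pairing g χ U z|) ⁻¹' Set.Ici ε) :=
    hJ.of_isClosed_subset hcl Set.inter_subset_left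
  have key := hcpt.induction_on
    (p := fun T => ∃ δ > 0, ∀ z ∈ T,
      ∃ s ∈ Set.Icc (0:ℝ) 1, ∃ i, δ ≤ (χ s z.1 z.2.1 i - z.1 i) ^ 2)
    ⟨1, one_pos, by simp⟩
    (fun S T hST ⟨δ, hδ, h⟩ => ⟨δ, hδ, fun z hz => h z (hST hz)⟩)
    (by
      rintro S T ⟨δ₁, hδ₁, h₁⟩ ⟨δ₂, hδ₂, h₂⟩
      refine ⟨min δ₁ δ₂, lt_min hδ₁ hδ₂, ?_⟩
      rintro z (hz | hz)
      · obtain ⟨s, hs, i, hi⟩ := h₁ z hz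
        exact ⟨s, hs, i, (min_le_left _ _).trans hi⟩
      · obtain ⟨s, hs, i, hi⟩ := h₂ z hz
        exact ⟨s, hs, i, (min_le_right _ _).trans hi⟩)
    (by
      rintro z ⟨hzJ, hzε⟩
      have hzU := hJU hzJ
      have hne : ∃ s ∈ Set.Icc (0:ℝ) 1, ∃ i, χ s z.1 z.2.1 i ≠ z.1 i := by
        by_contra! hcon
        have h0 := pairing_eq_zero (g := g) hχ hzU.1 hzU.2.1 hcon
        rw [Set.mem_preimage, h0, abs_zero, Set.mem_Ici] at hzε
        linarith
      obtain ⟨s, hs, i, hi⟩ := hne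
      have hpos : 0 < (χ s z.1 z.2.1 i - z.1 i) ^ 2 := by
        have := sub_ne_zero.2 hi
        positivity
      have hc : ContinuousOn (fun z : (Fin m → ℝ) × (Fin m → ℝ) × (Fin m → ℝ) × (Fin m → ℝ) =>
          (χ s z.1 z.2.1 i - z.1 i) ^ 2) (J ∩ (fun z => |pairing g χ U z|) ⁻¹' Set.Ici ε) := by
        have h1 : ContinuousOn (fun z : (Fin m → ℝ) × (Fin m → ℝ) × (Fin m → ℝ) × (Fin m → ℝ) =>
            χ s z.1 z.2.1) (J ∩ (fun z => |pairing g χ U z|) ⁻¹' Set.Ici ε) :=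
          hχ.continuousOn.comp
            (f := fun z : (Fin m → ℝ) × (Fin m → ℝ) × (Fin m → ℝ) × (Fin m → ℝ) =>
              (s, z.1, z.2.1))
            (by fun_prop) fun z hz => ⟨hs, (hJU hz.1).1, (hJU hz.1).2.1⟩
        exact ((continuousOn_pi.1 h1 i).sub (by fun_prop)).pow 2
      refine ⟨_, (hc z ⟨hzJ, hzε⟩).eventually (lt_mem_nhds (half_lt_self hpos)),
        _, half_pos hpos, fun y hy => ⟨s, hs, i, le_of_lt hy⟩⟩)
  obtain ⟨δ, hδ, h⟩ := key
  exact ⟨δ, hδ, fun z hz hzε => h z ⟨hz, hzε⟩⟩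

/-- A bounded nondecreasing function `a` on `ℝ` such that, for every `ε > 0`, the derivative is
bounded below by some `δ(ε) > 0` wherever `|a| ≥ ε`, has no positive value. -/
lemma nonpos_of_bounded {a a' : ℝ → ℝ} (ha : ∀ t, HasDerivAt a (a' t) t) (ha' : ∀ t, 0 ≤ a' t)
    {M : ℝ} (hM : ∀ t, |a t| ≤ M)
    (hgap : ∀ ε > 0, ∃ δ > 0, ∀ t, ε ≤ |a t| → δ ≤ a' t) (t₀ : ℝ) : a t₀ ≤ 0 := by
  by_contra! hpos
  obtain ⟨δ, hδ, h⟩ := hgap (a t₀) hpos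
  have hmono : Monotone a := monotone_of_hasDerivAt_nonneg ha ha'
  have hM0 : 0 ≤ M := (abs_nonneg _).trans (hM t₀)
  have hd : Differentiable ℝ a := fun t => (ha t).differentiableAt
  have h1 := (convex_Ici t₀).mul_sub_le_image_sub_of_le_deriv (f := a)
    hd.continuous.continuousOn hd.differentiableOn (C := δ)
    (fun t ht => by
      rw [(ha t).deriv]
      exact h t ((hmono (interior_subset ht)).trans (le_abs_self _)))
    t₀ Set.self_mem_Ici (t₀ + (2 * M + 1) / δ)
    (by rw [Set.mem_Ici]; have : 0 ≤ (2 * M + 1) / δ := by positivity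
        linarith)
    (by have : 0 ≤ (2 * M + 1) / δ := by positivity
        linarith)
  rw [add_sub_cancel_left, mul_div_cancel₀ _ hδ.ne'] at h1
  have h2 := abs_le.1 (hM t₀)
  have h3 := abs_le.1 (hM (t₀ + (2 * M + 1) / δ))
  linarith

lemma eq_zero_of_bounded {a a' : ℝ → ℝ} (ha : ∀ t, HasDerivAt a (a' t) t) (ha' : ∀ t, 0 ≤ a' t)
    {M : ℝ} (hM : ∀ t, |a t| ≤ M)
    (hgap : ∀ ε > 0, ∃ δ > 0, ∀ t, ε ≤ |a t| → δ ≤ a' t) (t₀ : ℝ) : a t₀ = 0 := by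
  refine le_antisymm (nonpos_of_bounded ha ha' hM hgap t₀) ?_
  -- The lower bound is the upper bound for the time reversal `t ↦ -a(-t)`.
  have h := nonpos_of_bounded (a := fun t => -a (-t)) (a' := fun t => a' (-t)) (M := M)
    (fun t => by
      have := (HasDerivAt.comp t (ha (-t)) (hasDerivAt_neg t)).neg
      exact this.congr_deriv (by ring))
    (fun t => ha' _) (fun t => by simpa using hM (-t))
    (fun ε hε => by
      obtain ⟨δ, hδ, h⟩ := hgap ε hε
      exact ⟨δ, hδ, fun t ht => h (-t) (by simpa using ht)⟩) (-t₀)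
  simpa using h

lemma norm_le_eNorm {n : ℕ} (a : Fin n → ℝ) : ‖a‖ ≤ eNorm a := by
  refine (pi_norm_le_iff_of_nonneg (Real.sqrt_nonneg _)).2 fun i => ?_
  rw [Real.norm_eq_abs, ← Real.sqrt_sq_eq_abs]
  exact Real.sqrt_le_sqrt (Finset.single_le_sum (f := fun i => a i ^ 2)
    (fun j _ => sq_nonneg _) (Finset.mem_univ i))

/-- Uniqueness of bounded classical solutions (single-chart form of the paper's
uniqueness proposition): given a connecting map `χ` with the stated convexity property,
for each `φ ∈ 𝕋^k` there is at most one `C²` solution `x : ℝ → 𝒦` of the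
Euler–Lagrange equations with bounded derivative. -/
theorem stmt2 {k m : ℕ} (ω : Fin k → ℝ)
    (U : Set (Fin m → ℝ)) (hU : IsOpen U)
    (g : (Fin m → ℝ) → Matrix (Fin m) (Fin m) ℝ)
    (hg : ∀ i j, ContDiffOn ℝ (⊤ : ℕ∞) (fun y => g y i j) U)
    (hgpos : ∀ x ∈ U, (g x).PosDef)
    (W : (Fin k → ℝ) → (Fin m → ℝ) → ℝ)
    (hWper : ∀ x, TorusPer (fun φ => W φ x))
    (hW : ContDiffOn ℝ (⊤ : ℕ∞) (fun p : (Fin k → ℝ) × (Fin m → ℝ) => W p.1 p.2)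
      (Set.univ ×ˢ U))
    (K : Set (Fin m → ℝ)) (hK : IsCompact K) (hKU : K ⊆ U)
    (κ : ℝ) (hκ : 0 < κ)
    (χ : ℝ → (Fin m → ℝ) → (Fin m → ℝ) → (Fin m → ℝ))
    (hχsmooth : ContDiffOn ℝ (⊤ : ℕ∞)
      (fun p : ℝ × (Fin m → ℝ) × (Fin m → ℝ) => χ p.1 p.2.1 p.2.2)
      (Set.Icc (0:ℝ) 1 ×ˢ U ×ˢ U))
    (hχU : ∀ s ∈ Set.Icc (0:ℝ) 1, ∀ x ∈ U, ∀ y ∈ U, χ s x y ∈ U)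
    -- (i) `χ(0,x,y) = x` and `χ(1,x,y) = y`:
    (hχ0 : ∀ x ∈ U, ∀ y ∈ U, χ 0 x y = x)
    (hχ1 : ∀ x ∈ U, ∀ y ∈ U, χ 1 x y = y)
    -- (ii) `∂_s χ(0,x,y) ≠ 0` whenever `x ≠ y`:
    (hχne : ∀ x ∈ U, ∀ y ∈ U, x ≠ y → deriv (fun s : ℝ => χ s x y) 0 ≠ 0)
    -- (iii) the convexity property of the Lagrangian density along `χ`:
    (hconv : ∀ x₁ x₂ : ℝ → (Fin m → ℝ), ContDiff ℝ (⊤ : ℕ∞) x₁ → ContDiff ℝ (⊤ : ℕ∞) x₂ →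
      (∀ t, x₁ t ∈ U) → (∀ t, x₂ t ∈ U) → ∀ φ : Fin k → ℝ,
      ∀ s ∈ Set.Icc (0:ℝ) 1, ∀ t : ℝ,
        κ * (dotp
              (Matrix.mulVec (g (χ s (x₁ t) (x₂ t)))
                (deriv (fun s' : ℝ => etaF χ x₁ x₂ s' t) s
                  + christoffel g (χ s (x₁ t) (x₂ t)) (xiF χ x₁ x₂ s t) (etaF χ x₁ x₂ s t)))
              (deriv (fun s' : ℝ => etaF χ x₁ x₂ s' t) s
                  + christoffel g (χ s (x₁ t) (x₂ t)) (xiF χ x₁ x₂ s t) (etaF χ x₁ x₂ s t))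
            + dotp (Matrix.mulVec (g (χ s (x₁ t) (x₂ t))) (xiF χ x₁ x₂ s t))
                (xiF χ x₁ x₂ s t)
              * (dotp (Matrix.mulVec (g (χ s (x₁ t) (x₂ t))) (etaF χ x₁ x₂ s t))
                  (etaF χ x₁ x₂ s t) + 1))
          ≤ deriv (deriv (fun s' : ℝ =>
              (1 / 2) * dotp (Matrix.mulVec (g (χ s' (x₁ t) (x₂ t))) (etaF χ x₁ x₂ s' t))
                  (etaF χ x₁ x₂ s' t)
                + W (φ + t • ω) (χ s' (x₁ t) (x₂ t)))) s) :
    ∀ φ : Fin k → ℝ, ∀ x₁ x₂ : ℝ → (Fin m → ℝ),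
      ContDiff ℝ 2 x₁ → ContDiff ℝ 2 x₂ →
      (∀ t, x₁ t ∈ K) → (∀ t, x₂ t ∈ K) →
      (∃ B : ℝ, ∀ t, eNorm (deriv x₁ t) ≤ B) →
      (∃ B : ℝ, ∀ t, eNorm (deriv x₂ t) ≤ B) →
      (∀ t : ℝ, deriv (deriv x₁) t + christoffel g (x₁ t) (deriv x₁ t) (deriv x₁ t)
        = Matrix.mulVec (g (x₁ t))⁻¹ (gradW W (φ + t • ω) (x₁ t))) →
      (∀ t : ℝ, deriv (deriv x₂) t + christoffel g (x₂ t) (deriv x₂ t) (deriv x₂ t)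
        = Matrix.mulVec (g (x₂ t))⁻¹ (gradW W (φ + t • ω) (x₂ t))) →
      x₁ = x₂ := by
  intro φ x₁ x₂ hx₁ hx₂ hx₁K hx₂K ⟨B₁, hB₁⟩ ⟨B₂, hB₂⟩ hEL₁ hEL₂
  have hχ : ContDiffOn ℝ (⊤ : ℕ∞)
      (fun z : ℝ × (Fin m → ℝ) × (Fin m → ℝ) => χ z.1 z.2.1 z.2.2) (chiDom U) := hχsmooth
  have hconv' : ConvexAlong ω U g W κ χ := hconv
  have h0 : (0:ℝ) ∈ Set.Icc (0:ℝ) 1 := Set.left_mem_Icc.2 zero_le_one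
  have h1 : (1:ℝ) ∈ Set.Icc (0:ℝ) 1 := Set.right_mem_Icc.2 zero_le_one
  have hx₁U : ∀ t, x₁ t ∈ U := fun t => hKU (hx₁K t)
  have hx₂U : ∀ t, x₂ t ∈ U := fun t => hKU (hx₂K t)
  have hd₁ : Differentiable ℝ x₁ := hx₁.differentiable (by simp)
  have hd₂ : Differentiable ℝ x₂ := hx₂.differentiable (by simp)
  have hKdom : Set.Icc (0:ℝ) 1 ×ˢ K ×ˢ K ⊆ chiDom U :=
    Set.prod_mono le_rfl (Set.prod_mono hKU hKU)
  -- Uniform ellipticity on the compact set swept out by the paths between points of `K`.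
  have hC : IsCompact ((fun z : ℝ × (Fin m → ℝ) × (Fin m → ℝ) => χ z.1 z.2.1 z.2.2) ''
      (Set.Icc (0:ℝ) 1 ×ˢ K ×ˢ K)) :=
    (isCompact_Icc.prod (hK.prod hK)).image_of_continuousOn (hχ.continuousOn.mono hKdom)
  obtain ⟨lam, hlam, hl⟩ := exists_metric_lower_bound hg hgpos hC (by
    rintro _ ⟨z, hz, rfl⟩
    exact hχU _ hz.1 _ (hKU hz.2.1) _ (hKU hz.2.2))
  have hl' : ∀ t, ∀ s ∈ Set.Icc (0:ℝ) 1, ∀ b : Fin m → ℝ,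
      lam * ‖b‖ ^ 2 ≤ dotp ((g (χ s (x₁ t) (x₂ t))).mulVec b) b := fun t s hs b =>
    hl _ ⟨(s, x₁ t, x₂ t), ⟨hs, hx₁K t, hx₂K t⟩, rfl⟩ b
  set jet : ℝ → (Fin m → ℝ) × (Fin m → ℝ) × (Fin m → ℝ) × (Fin m → ℝ) :=
    fun t => (x₁ t, x₂ t, deriv x₁ t, deriv x₂ t) with hjet
  set f₁ : ℝ → ℝ → ℝ := fun t => derivWithin
    (lag g W χ U (φ + t • ω) (x₁ t) (x₂ t) (deriv x₁ t) (deriv x₂ t)) (Set.Icc 0 1) with hf₁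
  have hderiv : ∀ t, HasDerivAt (fun τ => pairing g χ U (jet τ)) (f₁ t 1 - f₁ t 0) t := fun t =>
    (hasDerivAt_momentum hU hg hgpos hW hχ h1 (φ + t • ω) hd₁ hd₂ hx₂ hx₁U hx₂U hx₂U
      (fun τ => hχ1 _ (hx₁U τ) _ (hx₂U τ)) t (hEL₂ t)).sub
    (hasDerivAt_momentum hU hg hgpos hW hχ h0 (φ + t • ω) hd₁ hd₂ hx₁ hx₁U hx₂U hx₁U
      (fun τ => hχ0 _ (hx₁U τ) _ (hx₂U τ)) t (hEL₁ t))
  have hdisp : ∀ t, ∀ s ∈ Set.Icc (0:ℝ) 1, ∀ i,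
      κ * lam * (χ s (x₁ t) (x₂ t) i - x₁ t i) ^ 2 ≤ f₁ t 1 - f₁ t 0 := fun t s hs i =>
    sq_displacement_le hU hg hgpos hW hκ hχ hχU hχ0 hconv' (φ + t • ω) (hx₁U t) (hx₂U t)
      (deriv x₁ t) (deriv x₂ t) hlam (hl' t) hs i
  have hκl : 0 < κ * lam := mul_pos hκ hlam
  -- Dimension zero is trivial; otherwise any coordinate shows that the pairing is nondecreasing.
  rcases isEmpty_or_nonempty (Fin m) with hm | ⟨⟨i₀⟩⟩
  · exact funext fun t => Subsingleton.elim _ _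
  have hnonneg : ∀ t, 0 ≤ f₁ t 1 - f₁ t 0 := fun t =>
    (mul_nonneg hκl.le (sq_nonneg _)).trans (hdisp t 0 h0 i₀)
  set J : Set ((Fin m → ℝ) × (Fin m → ℝ) × (Fin m → ℝ) × (Fin m → ℝ)) :=
    K ×ˢ K ×ˢ Metric.closedBall 0 B₁ ×ˢ Metric.closedBall 0 B₂ with hJdef
  have hJ : IsCompact J :=
    hK.prod (hK.prod ((isCompact_closedBall 0 B₁).prod (isCompact_closedBall 0 B₂)))
  have hJU : J ⊆ U ×ˢ U ×ˢ Set.univ := fun z hz => ⟨hKU hz.1, hKU hz.2.1, trivial⟩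
  have hjetJ : ∀ t, jet t ∈ J := fun t =>
    ⟨hx₁K t, hx₂K t, mem_closedBall_zero_iff.2 ((norm_le_eNorm _).trans (hB₁ t)),
      mem_closedBall_zero_iff.2 ((norm_le_eNorm _).trans (hB₂ t))⟩
  obtain ⟨M, hM⟩ := hJ.exists_bound_of_continuousOn ((continuousOn_pairing hU hg hχ).mono hJU)
  have hzero : ∀ t, pairing g χ U (jet t) = 0 :=
    eq_zero_of_bounded hderiv hnonneg (M := M) (fun t => hM _ (hjetJ t)) fun ε hε => by
      obtain ⟨δ, hδ, h⟩ := exists_displacement hU hg hχ hJ hJU hε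
      refine ⟨κ * lam * δ, by positivity, fun t ht => ?_⟩
      obtain ⟨s, hs, i, hi⟩ := h _ (hjetJ t) ht
      exact (mul_le_mul_of_nonneg_left hi hκl.le).trans (hdisp t s hs i)
  funext t
  have hf0 : f₁ t 1 - f₁ t 0 = 0 := by
    have h := hderiv t
    simp only [hzero] at h
    exact h.unique (hasDerivAt_const t 0)
  ext i
  have h := hdisp t 1 h1 i
  rw [hf0, hχ1 _ (hx₁U t) _ (hx₂U t)] at h
  have h2 : (x₂ t i - x₁ t i) ^ 2 ≤ 0 := by
    by_contra! hc
    have := mul_pos hκl hc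
    linarith
  have h3 : x₂ t i - x₁ t i = 0 := pow_eq_zero_iff two_ne_zero |>.1 (le_antisymm h2 (sq_nonneg _))
  linarith
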